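/- Let p be prime and let P ∈ F_p[x_1,…,x_n] be a homogeneous polynomial of degree d with d < p. Then there exist m ≤ (n+d−1 choose d−1), coefficients α_1,…,α_m ∈ F_p, and coefficients β_{i,j} ∈ F_p for i ∈ [m], j ∈ [n], such that P(x_1,…,x_n) = Σ_{i=1}^m α_i (Σ_{j=1}^n β_{i,j} x_j)^d for all x_1,…,x_n ∈ F_p. -/

import Mathlib

namespace Waring

open MvPolynomial Module

variable {σ F : Type*} [Field F]

/-- The derivative in the direction `w`. -/
noncomputable def dirDeriv (w : σ → F) :
    Derivation F (MvPolynomial σ F) (MvPolynomial σ F) :=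
  mkDerivation F fun i => C (w i)

theorem dirDeriv_C (w : σ → F) (c : F) : dirDeriv w (C c) = 0 := derivation_C _ _

theorem dirDeriv_comm (v w : σ → F) (P : MvPolynomial σ F) :
    dirDeriv v (dirDeriv w P) = dirDeriv w (dirDeriv v P) := by
  have h : ⁅dirDeriv v, dirDeriv w⁆ = 0 := by
    apply derivation_ext
    intro i
    simp [Derivation.commutator_apply, dirDeriv]
  have h2 := congrArg (fun D => D P) h
  simpa [Derivation.commutator_apply, sub_eq_zero] using h2

theorem dirDeriv_add (v w : σ → F) (P : MvPolynomial σ F) :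
    dirDeriv (v + w) P = dirDeriv v P + dirDeriv w P := by
  have h : dirDeriv (v + w) = dirDeriv v + dirDeriv w := by
    apply derivation_ext
    intro i
    simp [dirDeriv]
  rw [h]; rfl

theorem dirDeriv_smul (c : F) (w : σ → F) (P : MvPolynomial σ F) :
    dirDeriv (c • w) P = C c * dirDeriv w P := by
  have h : dirDeriv (c • w) = c • dirDeriv w := by
    apply derivation_ext
    intro i
    simp [dirDeriv, smul_eq_C_mul]
  rw [h, Derivation.smul_apply, smul_eq_C_mul]

theorem dirDeriv_C_mul (w : σ → F) (c : F) (P : MvPolynomial σ F) :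
    dirDeriv w (C c * P) = C c * dirDeriv w P := by
  rw [Derivation.leibniz, dirDeriv_C, smul_zero, add_zero, smul_eq_mul]

theorem C_mul_mem {M : Submodule F (MvPolynomial σ F)} (c : F) {P : MvPolynomial σ F}
    (h : P ∈ M) : C c * P ∈ M := by
  rw [← smul_eq_C_mul]; exact M.smul_mem c h

variable [Fintype σ]

/-- The linear form with the given coefficient vector. -/
noncomputable def lin : (σ → F) →ₗ[F] MvPolynomial σ F :=
  Fintype.linearCombination F (X : σ → MvPolynomial σ F)

/-- The coefficient vectors of linear forms vanishing at `w`. -/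
def perp (w : σ → F) : Submodule F (σ → F) where
  carrier := {l | l ⬝ᵥ w = 0}
  add_mem' {a b} ha hb := by
    simp only [Set.mem_ofPred_eq] at *
    rw [add_dotProduct, ha, hb, add_zero]
  zero_mem' := zero_dotProduct w
  smul_mem' c a ha := by
    simp only [Set.mem_ofPred_eq] at *
    rw [smul_dotProduct, ha, smul_zero]

/-- The space of homogeneous polynomials of degree `d` in the linear forms from `E`. -/
noncomputable def forms (E : Submodule F (σ → F)) (d : ℕ) : Submodule F (MvPolynomial σ F) :=
  E.map lin ^ d

theorem mem_perp {l w : σ → F} : l ∈ perp w ↔ l ⬝ᵥ w = 0 := Iff.rfl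

@[simp] theorem dirDeriv_lin (w l : σ → F) : dirDeriv w (lin l) = C (l ⬝ᵥ w) := by
  simp [lin, Fintype.linearCombination_apply, dirDeriv, dotProduct, smul_eq_C_mul]

theorem lin_injective : Function.Injective (lin : (σ → F) →ₗ[F] MvPolynomial σ F) := by
  classical
  rw [injective_iff_map_eq_zero]
  intro l hl
  ext i
  have h := dirDeriv_lin (Pi.single i 1) l
  rw [hl, map_zero] at h
  simpa using h.symm

theorem eval_lin (x l : σ → F) : eval x (lin l) = ∑ j, l j * x j := by
  simp [lin, Fintype.linearCombination_apply, smul_eq_C_mul]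

theorem lin_smul (c : F) (l : σ → F) : lin (c • l) = C c * lin l := by
  rw [map_smul, smul_eq_C_mul]

theorem lin_mem_map {E : Submodule F (σ → F)} {l : σ → F} (hl : l ∈ E) : lin l ∈ E.map lin :=
  Submodule.mem_map_of_mem hl

theorem lin_mul_mem {E : Submodule F (σ → F)} {d : ℕ} {l : σ → F} (hl : l ∈ E)
    {P : MvPolynomial σ F} (hP : P ∈ forms E d) : lin l * P ∈ forms E (d + 1) := by
  rw [forms, pow_succ']
  exact Submodule.mul_mem_mul (lin_mem_map hl) hP

theorem lin_pow_mem {E : Submodule F (σ → F)} {l : σ → F} (hl : l ∈ E) (d : ℕ) :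
    lin l ^ d ∈ forms E d :=
  Submodule.pow_mem_pow _ (lin_mem_map hl) d

theorem lin_mul_lin_mem {E : Submodule F (σ → F)} {l m : σ → F} (hl : l ∈ E) (hm : m ∈ E) :
    lin l * lin m ∈ forms E 2 := by
  apply lin_mul_mem hl
  simpa using lin_pow_mem hm 1

theorem mem_forms_one {E : Submodule F (σ → F)} {P : MvPolynomial σ F} (hP : P ∈ forms E 1) :
    ∃ m ∈ E, lin m = P := by
  rw [forms, pow_one] at hP
  exact hP

theorem mem_forms_zero {E : Submodule F (σ → F)} {P : MvPolynomial σ F} (hP : P ∈ forms E 0) :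
    ∃ c, P = C c := by
  rw [forms, pow_zero] at hP
  obtain ⟨c, hc⟩ := Submodule.mem_one.1 hP
  exact ⟨c, hc.symm⟩

theorem isHomogeneous_mem_forms {d : ℕ} {P : MvPolynomial σ F} (hP : P.IsHomogeneous d) :
    P ∈ forms (⊤ : Submodule F (σ → F)) d := by
  have h : (⊤ : Submodule F (σ → F)).map lin = homogeneousSubmodule σ F 1 := by
    rw [homogeneousSubmodule_one_eq_span_X, Submodule.map_top, lin,
      Fintype.range_linearCombination]
  rw [forms, h, homogeneousSubmodule_one_pow]
  exact hP

theorem dirDeriv_mem_aux {E : Submodule F (σ → F)} (w : σ → F) {d : ℕ} {P : MvPolynomial σ F}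
    (hP : P ∈ forms E d) :
    dirDeriv w P ∈ forms E (d - 1) ∧ (d = 0 → dirDeriv w P = 0) := by
  induction hP using Submodule.pow_induction_on_left' with
  | algebraMap r =>
    have : dirDeriv w (algebraMap F (MvPolynomial σ F) r) = 0 := Derivation.map_algebraMap _ _
    rw [this]
    exact ⟨zero_mem _, fun _ => rfl⟩
  | add x y i hx hy h1 h2 =>
    rw [map_add]
    exact ⟨add_mem h1.1 h2.1, fun h => by rw [h1.2 h, h2.2 h, add_zero]⟩
  | mem_mul m hm i x hx ih =>
    obtain ⟨l, hl, rfl⟩ := hm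
    refine ⟨?_, fun h => absurd h (Nat.succ_ne_zero i)⟩
    rw [Derivation.leibniz, dirDeriv_lin, smul_eq_mul, smul_eq_mul]
    refine add_mem ?_ ?_
    · rcases i with _ | i
      · rw [ih.2 rfl, mul_zero]; exact zero_mem _
      · exact lin_mul_mem hl ih.1
    · rw [mul_comm]; exact C_mul_mem _ hx

theorem dirDeriv_mem {E : Submodule F (σ → F)} (w : σ → F) {d : ℕ} {P : MvPolynomial σ F}
    (hP : P ∈ forms E (d + 1)) : dirDeriv w P ∈ forms E d :=
  (dirDeriv_mem_aux w hP).1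

theorem dirDeriv_eq_zero_of_mem {E : Submodule F (σ → F)} {w : σ → F} (hE : E ≤ perp w) {d : ℕ}
    {P : MvPolynomial σ F} (hP : P ∈ forms E d) : dirDeriv w P = 0 := by
  induction hP using Submodule.pow_induction_on_left' with
  | algebraMap r => exact Derivation.map_algebraMap _ _
  | add x y i hx hy h1 h2 => rw [map_add, h1, h2, add_zero]
  | mem_mul m hm i x hx ih =>
    obtain ⟨l, hl, rfl⟩ := hm
    rw [Derivation.leibniz, dirDeriv_lin, mem_perp.1 (hE hl), ih]
    simp

theorem exists_split {E : Submodule F (σ → F)} {T w : σ → F} (hT : T ∈ E) (hTw : T ⬝ᵥ w = 1)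
    {d : ℕ} {P : MvPolynomial σ F} (hP : P ∈ forms E d) :
    ∃ A ∈ forms (E ⊓ perp w) d, ∃ R ∈ forms E (d - 1), (d = 0 → R = 0) ∧
      P = A + lin T * R := by
  induction hP using Submodule.pow_induction_on_left' with
  | algebraMap r =>
    refine ⟨algebraMap _ _ r, Submodule.mem_one.2 ⟨r, rfl⟩, 0, zero_mem _, fun _ => rfl, by simp⟩
  | add x y i hx hy h1 h2 =>
    obtain ⟨A, hA, R, hR, h0, rfl⟩ := h1
    obtain ⟨A', hA', R', hR', h0', rfl⟩ := h2
    exact ⟨A + A', add_mem hA hA', R + R', add_mem hR hR',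
      fun h => by rw [h0 h, h0' h, add_zero], by ring⟩
  | mem_mul m hm i x hx ih =>
    obtain ⟨l, hl, rfl⟩ := hm
    obtain ⟨A, hA, R, hR, h0, rfl⟩ := ih
    have hl' : l - (l ⬝ᵥ w) • T ∈ E ⊓ perp w := by
      refine ⟨sub_mem hl (E.smul_mem _ hT), ?_⟩
      rw [SetLike.mem_coe, mem_perp, sub_dotProduct, smul_dotProduct, hTw]
      simp
    refine ⟨lin (l - (l ⬝ᵥ w) • T) * A, lin_mul_mem hl' hA,
      C (l ⬝ᵥ w) * (A + lin T * R) + lin (l - (l ⬝ᵥ w) • T) * R, ?_,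
      fun h => absurd h (Nat.succ_ne_zero i), ?_⟩
    · refine add_mem (C_mul_mem _ hx) ?_
      rcases i with _ | i
      · rw [h0 rfl, mul_zero]; exact zero_mem _
      · exact lin_mul_mem hl'.1 hR
    · rw [map_sub, lin_smul]; ring

theorem eq_zero_of_mul_eq {E : Submodule F (σ → F)} {T w : σ → F} (hTw : T ⬝ᵥ w = 1)
    {d : ℕ} {R : MvPolynomial σ F} (hR : R ∈ forms E d) (j : ℕ)
    (hj : ∀ k, k ≤ d → ((j + k : ℕ) : F) ≠ 0)
    (h : C (j : F) * R + lin T * dirDeriv w R = 0) : R = 0 := by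
  induction d generalizing R j with
  | zero =>
    obtain ⟨c, rfl⟩ := mem_forms_zero hR
    rw [dirDeriv_C, mul_zero, add_zero, ← C_mul, ← C_0, C_inj] at h
    rcases mul_eq_zero.1 h with h | h
    · exact absurd h (by simpa using hj 0 le_rfl)
    · rw [h, C_0]
  | succ d ih =>
    have h2 : dirDeriv w R = 0 := by
      refine ih (dirDeriv_mem w hR) (j + 1) (fun k hk => ?_) ?_
      · have := hj (k + 1) (by omega)
        convert this using 2
        omega
      · have h3 := congrArg (dirDeriv w) h
        rw [map_add, Derivation.leibniz, Derivation.leibniz, dirDeriv_C, dirDeriv_lin, hTw,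
          map_zero] at h3
        simp only [smul_eq_mul] at h3
        push_cast [C_add, C_1] at h3 ⊢
        linear_combination h3
    rw [h2, mul_zero, add_zero] at h
    rcases mul_eq_zero.1 h with h | h
    · exact absurd (C_eq_zero.1 h) (by simpa using hj 0 (by omega))
    · exact h

/-- A form whose derivative in the direction `w` vanishes only involves linear forms
vanishing at `w`. -/
theorem mem_forms_inf_perp {E : Submodule F (σ → F)} {T w : σ → F} (hT : T ∈ E)
    (hTw : T ⬝ᵥ w ≠ 0) {d : ℕ} (hd : ∀ k, 1 ≤ k → k ≤ d → (k : F) ≠ 0)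
    {P : MvPolynomial σ F} (hP : P ∈ forms E d) (h : dirDeriv w P = 0) :
    P ∈ forms (E ⊓ perp w) d := by
  have hT' : ((T ⬝ᵥ w)⁻¹ • T) ⬝ᵥ w = 1 := by
    rw [smul_dotProduct, smul_eq_mul, inv_mul_cancel₀ hTw]
  obtain ⟨A, hA, R, hR, h0, rfl⟩ := exists_split (E.smul_mem _ hT) hT' hP
  rcases d with _ | d
  · rw [h0 rfl, mul_zero, add_zero]; exact hA
  · rw [map_add, dirDeriv_eq_zero_of_mem inf_le_right hA, zero_add, Derivation.leibniz,
      dirDeriv_lin, hT', smul_eq_mul, smul_eq_mul] at h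
    have : R = 0 := by
      refine eq_zero_of_mul_eq hT' hR 1 (fun k hk => hd _ (by omega) (by omega)) ?_
      rw [Nat.cast_one]
      linear_combination h
    rw [this, mul_zero, add_zero]; exact hA

theorem finrank_inf_perp {E : Submodule F (σ → F)} {T w : σ → F} (hT : T ∈ E)
    (hTw : T ⬝ᵥ w ≠ 0) : finrank F ↥(E ⊓ perp w) + 1 ≤ finrank F E := by
  apply Submodule.finrank_lt_finrank_of_lt
  refine lt_of_le_of_ne inf_le_left fun h => hTw ?_
  rw [← h] at hT
  exact hT.2

/-- `P` is a linear combination of at most `m` many `d`-th powers of linear forms from `A`. -/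
def IsPowerSum (A : Set (σ → F)) (d m : ℕ) (P : MvPolynomial σ F) : Prop :=
  ∃ L : List (F × (σ → F)), L.length ≤ m ∧ (∀ q ∈ L, q.2 ∈ A) ∧
    (L.map fun q => C q.1 * lin q.2 ^ d).sum = P

theorem IsPowerSum.zero (A : Set (σ → F)) (d m : ℕ) : IsPowerSum A d m 0 :=
  ⟨[], by simp, by simp, by simp⟩

theorem IsPowerSum.single {A : Set (σ → F)} (d : ℕ) (c : F) {l : σ → F} (hl : l ∈ A) :
    IsPowerSum A d 1 (C c * lin l ^ d) :=
  ⟨[(c, l)], by simp, by simpa using hl, by simp⟩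

theorem IsPowerSum.add {A : Set (σ → F)} {d m k : ℕ} {P Q : MvPolynomial σ F}
    (hP : IsPowerSum A d m P) (hQ : IsPowerSum A d k Q) : IsPowerSum A d (m + k) (P + Q) := by
  obtain ⟨L, h1, h2, rfl⟩ := hP
  obtain ⟨L', h1', h2', rfl⟩ := hQ
  refine ⟨L ++ L', by simp; omega, fun q hq => ?_, by simp⟩
  rcases List.mem_append.1 hq with h | h
  exacts [h2 q h, h2' q h]

theorem IsPowerSum.mono {A B : Set (σ → F)} {d m k : ℕ} {P : MvPolynomial σ F}
    (hP : IsPowerSum A d m P) (hAB : A ⊆ B) (hmk : m ≤ k) : IsPowerSum B d k P := by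
  obtain ⟨L, h1, h2, rfl⟩ := hP
  exact ⟨L, h1.trans hmk, fun q hq => hAB (h2 q hq), rfl⟩

/-- Antidifferentiation of sums of powers. -/
theorem IsPowerSum.exists_antideriv {E : Submodule F (σ → F)} {A : Set (σ → F)} {d m : ℕ}
    {P : MvPolynomial σ F} {w : σ → F} (hA : ∀ l ∈ A, l ∈ E ∧ l ⬝ᵥ w ≠ 0)
    (hd : ((d + 1 : ℕ) : F) ≠ 0) (hP : IsPowerSum A d m P) :
    ∃ Q ∈ forms E (d + 1), IsPowerSum A (d + 1) m Q ∧ dirDeriv w Q = P := by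
  obtain ⟨L, h1, h2, rfl⟩ := hP
  induction L generalizing m with
  | nil => exact ⟨0, zero_mem _, IsPowerSum.zero _ _ _, by simp⟩
  | cons q L ih =>
    obtain ⟨Q, hQE, hQ, hQ'⟩ := ih (m := L.length) le_rfl fun q hq => h2 q (by simp [hq])
    obtain ⟨hqE, hqw⟩ := hA _ (h2 q (by simp))
    refine ⟨C (q.1 / ((d + 1 : ℕ) * (q.2 ⬝ᵥ w))) * lin q.2 ^ (d + 1) + Q,
      add_mem (C_mul_mem _ (lin_pow_mem hqE _)) hQE,
      ((IsPowerSum.single (d + 1) _ (h2 q (by simp))).add hQ).mono subset_rfl ?_, ?_⟩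
    · simp at h1; omega
    · rw [map_add, hQ', Derivation.leibniz, Derivation.leibniz_pow, dirDeriv_C, dirDeriv_lin]
      have h3 : C (q.1 / ((d + 1 : ℕ) * (q.2 ⬝ᵥ w))) * (C ((d + 1 : ℕ) : F) * C (q.2 ⬝ᵥ w))
          = (C q.1 : MvPolynomial σ F) := by
        rw [← C_mul, ← C_mul, div_mul_cancel₀ _ (mul_ne_zero hd hqw)]
      simp only [smul_eq_mul, nsmul_eq_mul, List.map_cons, List.sum_cons, add_tsub_cancel_right]
      rw [map_natCast C (d + 1)] at h3
      linear_combination lin q.2 ^ d * h3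

theorem dirDeriv_lin_mul (w l m : σ → F) :
    dirDeriv w (lin l * lin m) = C (m ⬝ᵥ w) * lin l + C (l ⬝ᵥ w) * lin m := by
  rw [Derivation.leibniz, dirDeriv_lin, dirDeriv_lin, smul_eq_mul, smul_eq_mul]
  ring

theorem forms_bot_two : forms (⊥ : Submodule F (σ → F)) 2 = ⊥ := by
  rw [forms, Submodule.map_bot, pow_two, Submodule.bot_mul]

theorem exists_lin_eq_dirDeriv {E : Submodule F (σ → F)} {Q : MvPolynomial σ F}
    (hQ : Q ∈ forms E 2) (w : σ → F) : ∃ m ∈ E, dirDeriv w Q = lin m := by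
  obtain ⟨m, hm, h⟩ := mem_forms_one (dirDeriv_mem w hQ)
  exact ⟨m, hm, h.symm⟩

theorem dotProduct_comm_of_dirDeriv {Q : MvPolynomial σ F} {v w m n : σ → F}
    (hv : dirDeriv v Q = lin m) (hw : dirDeriv w Q = lin n) : m ⬝ᵥ w = n ⬝ᵥ v := by
  have h := dirDeriv_comm w v Q
  rw [hv, hw, dirDeriv_lin, dirDeriv_lin, C_inj] at h
  exact h

theorem natCast_ne_zero_of_le_two (h2 : (2 : F) ≠ 0) :
    ∀ k : ℕ, 1 ≤ k → k ≤ 2 → (k : F) ≠ 0 := by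
  intro k h1 hk
  interval_cases k
  · simp
  · exact_mod_cast h2

/-- The quadratic form minus the square of its derivative has vanishing derivative. -/
theorem dirDeriv_complete_square (h2 : (2 : F) ≠ 0) {Q : MvPolynomial σ F} {w m : σ → F}
    (hm : dirDeriv w Q = lin m) (hmw : m ⬝ᵥ w ≠ 0) :
    dirDeriv w (Q - C (2 * (m ⬝ᵥ w))⁻¹ * (lin m * lin m)) = 0 := by
  have h : (C (2 * (m ⬝ᵥ w))⁻¹ * (2 * C (m ⬝ᵥ w)) : MvPolynomial σ F) = 1 := by
    rw [show (2 : MvPolynomial σ F) = C 2 from (map_ofNat C 2).symm, ← C_mul, ← C_mul,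
      inv_mul_cancel₀ (mul_ne_zero h2 hmw), C_1]
  rw [map_sub, dirDeriv_C_mul, dirDeriv_lin_mul, hm]
  linear_combination -lin m * h

theorem eq_zero_of_dotProduct {m : σ → F} (h : ∀ v, m ⬝ᵥ v = 0) : m = 0 :=
  dotProduct_eq_zero m h

/-- Diagonalization of quadratic forms. -/
theorem isPowerSum_diag (h2 : (2 : F) ≠ 0) {k : ℕ} {E : Submodule F (σ → F)}
    (hE : finrank F E ≤ k) {Q : MvPolynomial σ F} (hQ : Q ∈ forms E 2) :
    IsPowerSum (E : Set (σ → F)) 2 k Q := by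
  induction k generalizing E Q with
  | zero =>
    have : E = ⊥ := Submodule.finrank_eq_zero.1 (by omega)
    rw [this, forms_bot_two, Submodule.mem_bot] at hQ
    rw [hQ]
    exact IsPowerSum.zero _ _ _
  | succ k ih =>
    by_cases h : ∃ w, dirDeriv w (dirDeriv w Q) ≠ 0
    · obtain ⟨w, hw⟩ := h
      obtain ⟨m, hmE, hm⟩ := exists_lin_eq_dirDeriv hQ w
      rw [hm, dirDeriv_lin, Ne, C_eq_zero] at hw
      have h1 := finrank_inf_perp hmE hw
      have h3 := ih (E := E ⊓ perp w) (by omega) (mem_forms_inf_perp hmE hw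
        (natCast_ne_zero_of_le_two h2) (sub_mem hQ (C_mul_mem _ (lin_mul_lin_mem hmE hmE)))
        (dirDeriv_complete_square h2 hm hw))
      have h4 := (h3.mono (B := (E : Set (σ → F))) (fun _ hx => hx.1) le_rfl).add
        (IsPowerSum.single 2 (2 * (m ⬝ᵥ w))⁻¹ hmE)
      rwa [pow_two, sub_add_cancel] at h4
    · push Not at h
      by_cases hb : E = ⊥
      · rw [hb, forms_bot_two, Submodule.mem_bot] at hQ
        rw [hQ]
        exact IsPowerSum.zero _ _ _
      · obtain ⟨T, hT, hT0⟩ := Submodule.exists_mem_ne_zero_of_ne_bot hb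
        obtain ⟨w, hw⟩ : ∃ w, T ⬝ᵥ w ≠ 0 := by
          by_contra hc
          push Not at hc
          exact hT0 (eq_zero_of_dotProduct hc)
        have hz : dirDeriv w Q = 0 := by
          obtain ⟨m, hmE, hm⟩ := exists_lin_eq_dirDeriv hQ w
          rw [hm, eq_zero_of_dotProduct (m := m), map_zero]
          intro v
          have h5 := h (v + w)
          rw [dirDeriv_add, dirDeriv_add, map_add, map_add, h v, h w, dirDeriv_comm w v, hm,
            dirDeriv_lin, zero_add, add_zero, ← C_add, C_eq_zero, ← two_mul] at h5
          exact (mul_eq_zero.1 h5).resolve_left h2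
        have h1 := finrank_inf_perp hT hw
        exact (ih (E := E ⊓ perp w) (by omega) (mem_forms_inf_perp hT hw
          (natCast_ne_zero_of_le_two h2) hQ hz)).mono (fun _ hx => hx.1) (by omega)

/-- Adding a square of a form from `A` to a sum of squares of forms from `Y` lets one move
all squares into `A`. -/
theorem IsPowerSum.add_sq (h2 : (2 : F) ≠ 0) (h3 : (3 : F) ≠ 0) {A Y : Set (σ → F)}
    (hAY : ∀ (c : F) T y, c ≠ 0 → T ∈ A → y ∈ Y → c • T + y ∈ A)
    (hY : ∀ (c : F) y, y ∈ Y → c • y ∈ Y)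
    {k : ℕ} {Q : MvPolynomial σ F} (hQ : IsPowerSum Y 2 k Q) {T : σ → F} (hT : T ∈ A)
    {a : F} (ha : a ≠ 0) : IsPowerSum A 2 (k + 1) (C a * lin T ^ 2 + Q) := by
  obtain ⟨L, hL, hLY, rfl⟩ := hQ
  induction L generalizing k T a with
  | nil => simpa using (IsPowerSum.single 2 a hT).mono subset_rfl (by omega)
  | cons q L ih =>
    obtain ⟨b, y⟩ := q
    have hy : y ∈ Y := hLY (b, y) (by simp)
    have hLk : L.length + 1 ≤ k := by simpa using hL
    obtain ⟨s, hs, hbs⟩ : ∃ s : F, s ≠ 0 ∧ b + a * s ^ 2 ≠ 0 := by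
      by_contra! hc
      have e1 := hc 1 one_ne_zero
      have e2 := hc 2 h2
      have : a * 3 = 0 := by linear_combination e2 - e1
      exact mul_ne_zero ha h3 this
    by_cases hb : b = 0
    · have := ih (k := L.length) hT ha le_rfl
        (fun q hq => hLY q (by simp [hq]))
      simpa [hb] using this.mono subset_rfl (by omega)
    · have hT1 : (a * s) • T + b • y ∈ A := hAY _ _ _ (mul_ne_zero ha hs) hT (hY _ _ hy)
      have hT2 : (1 : F) • T + (-s) • y ∈ A := hAY _ _ _ one_ne_zero hT (hY _ _ hy)
      have ha2 : a * b / (b + a * s ^ 2) ≠ 0 := div_ne_zero (mul_ne_zero ha hb) hbs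
      have h4 := ih (k := L.length) hT2 ha2 le_rfl fun q hq => hLY q (by simp [hq])
      have h5 := (h4.add (IsPowerSum.single 2 (b + a * s ^ 2)⁻¹ hT1)).mono subset_rfl
        (show L.length + 1 + 1 ≤ k + 1 by omega)
      convert h5 using 1
      have e1 : (C (b + a * s ^ 2)⁻¹ : MvPolynomial σ F) * (C b + C a * C s ^ 2) = 1 := by
        rw [← C_pow, ← C_mul, ← C_add, ← C_mul, inv_mul_cancel₀ hbs, C_1]
      simp only [List.map_cons, List.sum_cons, map_add, lin_smul, div_eq_mul_inv, C_mul, C_neg,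
        C_1]
      linear_combination (-C a * lin T ^ 2 - C b * lin y ^ 2) * e1

theorem isPowerSum_sq_add (h2 : (2 : F) ≠ 0) (h3 : (3 : F) ≠ 0) {A : Set (σ → F)}
    {Y : Submodule F (σ → F)} (hAY : ∀ (c : F) T y, c ≠ 0 → T ∈ A → y ∈ Y → c • T + y ∈ A)
    {k : ℕ} (hYk : finrank F Y + 1 ≤ k) {Q : MvPolynomial σ F} (hQ : Q ∈ forms Y 2)
    {T : σ → F} (hT : T ∈ A) {a : F} (ha : a ≠ 0) :
    IsPowerSum A 2 k (C a * lin T ^ 2 + Q) :=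
  ((isPowerSum_diag h2 le_rfl hQ).add_sq h2 h3 (fun c T y hc hT hy => hAY c T y hc hT hy)
    (fun c _ hy => Y.smul_mem c hy) hT ha).mono subset_rfl hYk

/-- `A` is a subset of `E`, and membership of a form in `A` only depends on its values at
`u₀` and `u₁` up to a common nonzero factor. -/
def IsDeterminedBy (A : Set (σ → F)) (E : Submodule F (σ → F)) (u₀ u₁ : σ → F) : Prop :=
  (∀ T ∈ A, T ∈ E) ∧ ∀ T ∈ A, ∀ c : F, c ≠ 0 → ∀ m ∈ E,
    m ⬝ᵥ u₀ = c * (T ⬝ᵥ u₀) → m ⬝ᵥ u₁ = c * (T ⬝ᵥ u₁) → m ∈ A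

theorem IsDeterminedBy.add_mem {A : Set (σ → F)} {E : Submodule F (σ → F)} {u₀ u₁ : σ → F}
    (hA : IsDeterminedBy A E u₀ u₁) {Y : Submodule F (σ → F)} (hYE : Y ≤ E)
    (hY₀ : Y ≤ perp u₀) (hY₁ : Y ≤ perp u₁) (c : F) (T y : σ → F) (hc : c ≠ 0) (hT : T ∈ A)
    (hy : y ∈ Y) : c • T + y ∈ A := by
  refine hA.2 T hT c hc _ (E.add_mem (E.smul_mem _ (hA.1 T hT)) (hYE hy)) ?_ ?_
  · rw [add_dotProduct, smul_dotProduct, mem_perp.1 (hY₀ hy), add_zero, smul_eq_mul]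
  · rw [add_dotProduct, smul_dotProduct, mem_perp.1 (hY₁ hy), add_zero, smul_eq_mul]

theorem isPowerSum_of_dirDeriv_mem (h2 : (2 : F) ≠ 0) (h3 : (3 : F) ≠ 0)
    {E : Submodule F (σ → F)} {A : Set (σ → F)} {v₀ v₁ m₀ m₁ : σ → F} (hAE : ∀ T ∈ A, T ∈ E)
    (hA : ∀ (c : F) T y, c ≠ 0 → T ∈ A → y ∈ E ⊓ perp v₀ ⊓ perp v₁ → c • T + y ∈ A)
    {R : MvPolynomial σ F} (hR : R ∈ forms E 2)
    (h₀ : dirDeriv v₀ R = lin m₀) (h₁ : dirDeriv v₁ R = lin m₁)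
    (hm₀ : m₀ ∈ A) (hm₁ : m₁ ∈ A) (h00 : m₀ ⬝ᵥ v₀ ≠ 0) (h01 : m₀ ⬝ᵥ v₁ = 0)
    (h11 : m₁ ⬝ᵥ v₁ ≠ 0) : IsPowerSum A 2 (finrank F E) R := by
  have h10 : m₁ ⬝ᵥ v₀ = 0 := by rw [dotProduct_comm_of_dirDeriv h₁ h₀, h01]
  have hm₁' : m₁ ∈ E ⊓ perp v₀ := ⟨hAE _ hm₁, h10⟩
  set R₀ := R - C (2 * (m₀ ⬝ᵥ v₀))⁻¹ * (lin m₀ * lin m₀) with hR₀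
  set R₁ := R₀ - C (2 * (m₁ ⬝ᵥ v₁))⁻¹ * (lin m₁ * lin m₁) with hR₁
  have e0 : dirDeriv v₀ R₀ = 0 := dirDeriv_complete_square h2 h₀ h00
  have e1 : dirDeriv v₁ R₀ = lin m₁ := by
    rw [hR₀, map_sub, dirDeriv_C_mul, dirDeriv_lin_mul, h01, h₁]
    simp
  have e1' : dirDeriv v₁ R₁ = 0 := dirDeriv_complete_square h2 e1 h11
  have e0' : dirDeriv v₀ R₁ = 0 := by
    rw [hR₁, map_sub, dirDeriv_C_mul, dirDeriv_lin_mul, h10, e0]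
    simp
  have hR₁E : R₁ ∈ forms E 2 :=
    sub_mem (sub_mem hR (C_mul_mem _ (lin_mul_lin_mem (hAE _ hm₀) (hAE _ hm₀))))
      (C_mul_mem _ (lin_mul_lin_mem (hAE _ hm₁) (hAE _ hm₁)))
  have hR₁Y : R₁ ∈ forms (E ⊓ perp v₀ ⊓ perp v₁) 2 :=
    mem_forms_inf_perp hm₁' h11 (natCast_ne_zero_of_le_two h2)
      (mem_forms_inf_perp (hAE _ hm₀) h00 (natCast_ne_zero_of_le_two h2) hR₁E e0') e1'
  have f0 := finrank_inf_perp (hAE _ hm₀) h00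
  have f1 := finrank_inf_perp hm₁' h11
  have key := (isPowerSum_sq_add h2 h3 hA le_rfl hR₁Y hm₀
    (inv_ne_zero (mul_ne_zero h2 h00))).add (IsPowerSum.single 2 (2 * (m₁ ⬝ᵥ v₁))⁻¹ hm₁)
  convert key.mono subset_rfl (show _ ≤ finrank F E by omega) using 1
  rw [hR₁, hR₀]
  ring

/-- A quadratic form whose restriction to the plane of `u₀` and `u₁` is diagonal with respect to
two admissible forms. -/
theorem isPowerSum_of_diag_restrict (h2 : (2 : F) ≠ 0) (h3 : (3 : F) ≠ 0)
    {E : Submodule F (σ → F)} {A : Set (σ → F)} {u₀ u₁ : σ → F} (hA : IsDeterminedBy A E u₀ u₁)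
    {T T' : σ → F} (hT : T ∈ A) (hT' : T' ∈ A)
    (hΔ : (T ⬝ᵥ u₀) * (T' ⬝ᵥ u₁) - (T ⬝ᵥ u₁) * (T' ⬝ᵥ u₀) ≠ 0)
    {R : MvPolynomial σ F} (hR : R ∈ forms E 2) {r₀ r₁ : σ → F} {α α' : F}
    (hα : α ≠ 0) (hα' : α' ≠ 0)
    (h₀ : dirDeriv u₀ R = lin r₀) (h₁ : dirDeriv u₁ R = lin r₁)
    (h00 : r₀ ⬝ᵥ u₀ = α * (T ⬝ᵥ u₀) ^ 2 + α' * (T' ⬝ᵥ u₀) ^ 2)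
    (h01 : r₀ ⬝ᵥ u₁ = α * (T ⬝ᵥ u₀) * (T ⬝ᵥ u₁) + α' * (T' ⬝ᵥ u₀) * (T' ⬝ᵥ u₁))
    (h11 : r₁ ⬝ᵥ u₁ = α * (T ⬝ᵥ u₁) ^ 2 + α' * (T' ⬝ᵥ u₁) ^ 2) :
    IsPowerSum A 2 (finrank F E) R := by
  have h10 := (dotProduct_comm_of_dirDeriv h₀ h₁).symm.trans h01
  have hr₀ : r₀ ∈ E := by
    obtain ⟨m, hm, h⟩ := exists_lin_eq_dirDeriv hR u₀
    rwa [lin_injective (h₀.symm.trans h)]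
  have hr₁ : r₁ ∈ E := by
    obtain ⟨m, hm, h⟩ := exists_lin_eq_dirDeriv hR u₁
    rwa [lin_injective (h₁.symm.trans h)]
  set t₀ := T ⬝ᵥ u₀
  set t₁ := T ⬝ᵥ u₁
  set t₀' := T' ⬝ᵥ u₀
  set t₁' := T' ⬝ᵥ u₁
  have hperp : ∀ y, y ∈ E ⊓ perp (t₁' • u₀ + (-t₀') • u₁) ⊓ perp ((-t₁) • u₀ + t₀ • u₁) →
      y ∈ E ⊓ perp u₀ ⊓ perp u₁ := by
    rintro y ⟨⟨hy, ha⟩, hb⟩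
    rw [SetLike.mem_coe, mem_perp, dotProduct_add, dotProduct_smul, dotProduct_smul,
      smul_eq_mul, smul_eq_mul] at ha hb
    refine ⟨⟨hy, ?_⟩, ?_⟩
    · refine (mul_eq_zero.1 (?_ : (t₀ * t₁' - t₁ * t₀') * (y ⬝ᵥ u₀) = 0)).resolve_left hΔ
      linear_combination t₀ * ha + t₀' * hb
    · refine (mul_eq_zero.1 (?_ : (t₀ * t₁' - t₁ * t₀') * (y ⬝ᵥ u₁) = 0)).resolve_left hΔ
      linear_combination t₁ * ha + t₁' * hb
  refine isPowerSum_of_dirDeriv_mem h2 h3 (v₀ := t₁' • u₀ + (-t₀') • u₁)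
    (v₁ := (-t₁) • u₀ + t₀ • u₁) (m₀ := t₁' • r₀ + (-t₀') • r₁)
    (m₁ := (-t₁) • r₀ + t₀ • r₁) hA.1 ?_ hR ?_ ?_ ?_ ?_ ?_ ?_ ?_
  · intro c T y hc hT hy
    exact hA.add_mem (Y := E ⊓ perp u₀ ⊓ perp u₁) (fun _ h => h.1.1) (fun _ h => h.1.2)
      (fun _ h => h.2) c T y hc hT (hperp y hy)
  · rw [dirDeriv_add, dirDeriv_smul, dirDeriv_smul, h₀, h₁, map_add, lin_smul, lin_smul]
  · rw [dirDeriv_add, dirDeriv_smul, dirDeriv_smul, h₀, h₁, map_add, lin_smul, lin_smul]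
  · refine hA.2 T hT (α * (t₀ * t₁' - t₁ * t₀')) (mul_ne_zero hα hΔ) _
      (E.add_mem (E.smul_mem _ hr₀) (E.smul_mem _ hr₁)) ?_ ?_
    · rw [add_dotProduct, smul_dotProduct, smul_dotProduct, h00, h10, smul_eq_mul, smul_eq_mul]
      ring
    · rw [add_dotProduct, smul_dotProduct, smul_dotProduct, h01, h11, smul_eq_mul, smul_eq_mul]
      ring
  · refine hA.2 T' hT' (α' * (t₀ * t₁' - t₁ * t₀')) (mul_ne_zero hα' hΔ) _
      (E.add_mem (E.smul_mem _ hr₀) (E.smul_mem _ hr₁)) ?_ ?_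
    · rw [add_dotProduct, smul_dotProduct, smul_dotProduct, h00, h10, smul_eq_mul, smul_eq_mul]
      ring
    · rw [add_dotProduct, smul_dotProduct, smul_dotProduct, h01, h11, smul_eq_mul, smul_eq_mul]
      ring
  · have : (t₁' • r₀ + (-t₀') • r₁) ⬝ᵥ (t₁' • u₀ + (-t₀') • u₁) =
        α * (t₀ * t₁' - t₁ * t₀') ^ 2 := by
      simp only [add_dotProduct, smul_dotProduct, dotProduct_add, dotProduct_smul, smul_eq_mul,
        h00, h01, h10, h11]
      ring
    rw [this]
    exact mul_ne_zero hα (pow_ne_zero _ hΔ)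
  · simp only [add_dotProduct, smul_dotProduct, dotProduct_add, dotProduct_smul, smul_eq_mul,
      h00, h01, h10, h11]
    ring
  · have : ((-t₁) • r₀ + t₀ • r₁) ⬝ᵥ ((-t₁) • u₀ + t₀ • u₁) =
        α' * (t₀ * t₁' - t₁ * t₀') ^ 2 := by
      simp only [add_dotProduct, smul_dotProduct, dotProduct_add, dotProduct_smul, smul_eq_mul,
        h00, h01, h10, h11]
      ring
    rw [this]
    exact mul_ne_zero hα' (pow_ne_zero _ hΔ)

/-- A variant of `isPowerSum_of_diag_restrict` with a third admissible square. -/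
theorem isPowerSum_of_diag_restrict_add (h2 : (2 : F) ≠ 0) (h3 : (3 : F) ≠ 0)
    {E : Submodule F (σ → F)} {A : Set (σ → F)} {u₀ u₁ : σ → F} (hA : IsDeterminedBy A E u₀ u₁)
    {T T' : σ → F} (hT : T ∈ A) (hT' : T' ∈ A)
    (hΔ : (T ⬝ᵥ u₀) * (T' ⬝ᵥ u₁) - (T ⬝ᵥ u₁) * (T' ⬝ᵥ u₀) ≠ 0)
    {S : σ → F} (hS : S ∈ A)
    {R : MvPolynomial σ F} (hR : R ∈ forms E 2) {r₀ r₁ : σ → F} {α α' β : F}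
    (hα : α ≠ 0) (hα' : α' ≠ 0)
    (h₀ : dirDeriv u₀ R = lin r₀) (h₁ : dirDeriv u₁ R = lin r₁)
    (h00 : r₀ ⬝ᵥ u₀ = α * (T ⬝ᵥ u₀) ^ 2 + α' * (T' ⬝ᵥ u₀) ^ 2 + β * (S ⬝ᵥ u₀) ^ 2)
    (h01 : r₀ ⬝ᵥ u₁ = α * (T ⬝ᵥ u₀) * (T ⬝ᵥ u₁) + α' * (T' ⬝ᵥ u₀) * (T' ⬝ᵥ u₁) +
      β * (S ⬝ᵥ u₀) * (S ⬝ᵥ u₁))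
    (h11 : r₁ ⬝ᵥ u₁ = α * (T ⬝ᵥ u₁) ^ 2 + α' * (T' ⬝ᵥ u₁) ^ 2 + β * (S ⬝ᵥ u₁) ^ 2) :
    IsPowerSum A 2 (finrank F E + 1) R := by
  have hβ : (C (β / 2) * 2 : MvPolynomial σ F) = C β := by
    rw [show (2 : MvPolynomial σ F) = C 2 from (map_ofNat C 2).symm, ← C_mul,
      div_mul_cancel₀ _ h2]
  have key := isPowerSum_of_diag_restrict h2 h3 hA hT hT' hΔ (α := α) (α' := α')
    (R := R - C (β / 2) * (lin S * lin S)) (r₀ := r₀ - (β * (S ⬝ᵥ u₀)) • S)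
    (r₁ := r₁ - (β * (S ⬝ᵥ u₁)) • S)
    (sub_mem hR (C_mul_mem _ (lin_mul_lin_mem (hA.1 _ hS) (hA.1 _ hS)))) hα hα'
    (by
      rw [map_sub, h₀, dirDeriv_C_mul, dirDeriv_lin_mul, map_sub, lin_smul, C_mul]
      linear_combination -C (S ⬝ᵥ u₀) * lin S * hβ)
    (by
      rw [map_sub, h₁, dirDeriv_C_mul, dirDeriv_lin_mul, map_sub, lin_smul, C_mul]
      linear_combination -C (S ⬝ᵥ u₁) * lin S * hβ)
    (by rw [sub_dotProduct, smul_dotProduct, h00, smul_eq_mul]; ring)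
    (by rw [sub_dotProduct, smul_dotProduct, h01, smul_eq_mul]; ring)
    (by rw [sub_dotProduct, smul_dotProduct, h11, smul_eq_mul]; ring)
  have := key.add (IsPowerSum.single 2 (β / 2) hS)
  rwa [pow_two, sub_add_cancel] at this

/-- A nonzero quadratic form vanishing on the plane of `v` and `v'` but not having this plane
in its radical. -/
theorem isPowerSum_of_isotropic (h2 : (2 : F) ≠ 0) (h3 : (3 : F) ≠ 0)
    {E : Submodule F (σ → F)} {A : Set (σ → F)} {v v' : σ → F} (hA : IsDeterminedBy A E v v')
    {T T' : σ → F} (hT : T ∈ A) (hT' : T' ∈ A) (hTv : T ⬝ᵥ v = 1) (hTv' : T ⬝ᵥ v' = 0)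
    (hT'v : T' ⬝ᵥ v = 0) (hT'v' : T' ⬝ᵥ v' = 1)
    {Q : MvPolynomial σ F} (hQ : Q ∈ forms E 2) {γ δ : σ → F}
    (hγ : dirDeriv v Q = lin γ) (hδ : dirDeriv v' Q = lin δ) (hγ0 : γ ≠ 0)
    (hγv : γ ⬝ᵥ v = 0) (hγv' : γ ⬝ᵥ v' = 0) (hδv' : δ ⬝ᵥ v' = 0) :
    IsPowerSum A 2 (finrank F E + 1) Q := by
  have hδv : δ ⬝ᵥ v = 0 := by rw [dotProduct_comm_of_dirDeriv hδ hγ, hγv']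
  have hγE : γ ∈ E := by
    obtain ⟨m, hm, h⟩ := exists_lin_eq_dirDeriv hQ v
    rwa [lin_injective (hγ.symm.trans h)]
  have hδE : δ ∈ E := by
    obtain ⟨m, hm, h⟩ := exists_lin_eq_dirDeriv hQ v'
    rwa [lin_injective (hδ.symm.trans h)]
  obtain ⟨w, hγw, hT'w⟩ : ∃ w, γ ⬝ᵥ w = 1 ∧ T' ⬝ᵥ w = 0 := by
    obtain ⟨w₀, hw₀⟩ : ∃ w, γ ⬝ᵥ w ≠ 0 := by
      by_contra! hc
      exact hγ0 (eq_zero_of_dotProduct hc)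
    refine ⟨(γ ⬝ᵥ w₀)⁻¹ • (w₀ - (T' ⬝ᵥ w₀) • v'), ?_, ?_⟩
    · simp [dotProduct_smul, dotProduct_sub, hγv', hw₀]
    · simp [dotProduct_smul, dotProduct_sub, hT'v']
  obtain ⟨ρ, hρE, hρ⟩ := exists_lin_eq_dirDeriv hQ w
  have hρv : ρ ⬝ᵥ v = 1 := by rw [dotProduct_comm_of_dirDeriv hρ hγ, hγw]
  have hρv' : ρ ⬝ᵥ v' = δ ⬝ᵥ w := dotProduct_comm_of_dirDeriv hρ hδ
  set κ := ρ ⬝ᵥ w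
  set M := ρ - (δ ⬝ᵥ w) • T' - (κ / 2) • γ with hM
  have hME : M ∈ E := sub_mem (sub_mem hρE (E.smul_mem _ (hA.1 _ hT'))) (E.smul_mem _ hγE)
  have hMv : M ⬝ᵥ v = 1 := by
    simp [hM, sub_dotProduct, smul_dotProduct, hρv, hT'v, hγv]
  have hMv' : M ⬝ᵥ v' = 0 := by
    simp [hM, sub_dotProduct, smul_dotProduct, hρv', hT'v', hγv']
  have hMw : M ⬝ᵥ w = κ / 2 := by
    simp only [hM, sub_dotProduct, smul_dotProduct, hT'w, hγw, smul_eq_mul]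
    field_simp
    ring
  set Q₀ := Q - lin γ * lin M - lin T' * lin δ with hQ₀
  have hQ₀E : Q₀ ∈ forms E 2 :=
    sub_mem (sub_mem hQ (lin_mul_lin_mem hγE hME)) (lin_mul_lin_mem (hA.1 _ hT') hδE)
  have d0 : dirDeriv v Q₀ = 0 := by
    rw [hQ₀, map_sub, map_sub, hγ, dirDeriv_lin_mul, dirDeriv_lin_mul, hMv, hγv, hδv, hT'v]
    simp
  have d1 : dirDeriv v' Q₀ = 0 := by
    rw [hQ₀, map_sub, map_sub, hδ, dirDeriv_lin_mul, dirDeriv_lin_mul, hMv', hγv', hδv', hT'v']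
    simp
  have d2 : dirDeriv w Q₀ = 0 := by
    rw [hQ₀, map_sub, map_sub, hρ, dirDeriv_lin_mul, dirDeriv_lin_mul, hMw, hγw, hT'w]
    simp only [hM, map_sub, lin_smul, C_0, C_1]
    ring
  have hn := natCast_ne_zero_of_le_two h2
  have hTE : T ∈ E := hA.1 _ hT
  have hT'E : T' ∈ E ⊓ perp v := ⟨hA.1 _ hT', hT'v⟩
  have hγE' : γ ∈ E ⊓ perp v ⊓ perp v' := ⟨⟨hγE, hγv⟩, hγv'⟩
  have n0 : T ⬝ᵥ v ≠ 0 := by rw [hTv]; exact one_ne_zero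
  have n1 : T' ⬝ᵥ v' ≠ 0 := by rw [hT'v']; exact one_ne_zero
  have n2 : γ ⬝ᵥ w ≠ 0 := by rw [hγw]; exact one_ne_zero
  have hQ₀Y := mem_forms_inf_perp hγE' n2 hn
    (mem_forms_inf_perp hT'E n1 hn (mem_forms_inf_perp hTE n0 hn hQ₀E d0) d1) d2
  have f0 := finrank_inf_perp hTE n0
  have f1 := finrank_inf_perp hT'E n1
  have f2 := finrank_inf_perp hγE' n2
  have h4 : (4 : F) ≠ 0 := by
    have : (4 : F) = 2 * 2 := by norm_num
    rw [this]
    exact mul_ne_zero h2 h2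
  have mA : ∀ m ∈ E, m ⬝ᵥ v = 1 → m ⬝ᵥ v' = 0 → m ∈ A := fun m hm ha hb =>
    hA.2 T hT 1 one_ne_zero m hm (by rw [ha, hTv, one_mul]) (by rw [hb, hTv', mul_zero])
  have mA' : ∀ m ∈ E, m ⬝ᵥ v = 0 → m ⬝ᵥ v' = 1 → m ∈ A := fun m hm ha hb =>
    hA.2 T' hT' 1 one_ne_zero m hm (by rw [ha, hT'v, mul_zero]) (by rw [hb, hT'v', one_mul])
  have a1 : M + γ ∈ A := mA _ (add_mem hME hγE)
    (by rw [add_dotProduct, hMv, hγv, add_zero]) (by rw [add_dotProduct, hMv', hγv', add_zero])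
  have a2 : M - γ ∈ A := mA _ (sub_mem hME hγE)
    (by rw [sub_dotProduct, hMv, hγv, sub_zero]) (by rw [sub_dotProduct, hMv', hγv', sub_zero])
  have a3 : T' + δ ∈ A := mA' _ (add_mem hT'E.1 hδE)
    (by rw [add_dotProduct, hT'v, hδv, add_zero])
    (by rw [add_dotProduct, hT'v', hδv', add_zero])
  have a4 : T' - δ ∈ A := mA' _ (sub_mem hT'E.1 hδE)
    (by rw [sub_dotProduct, hT'v, hδv, sub_zero])
    (by rw [sub_dotProduct, hT'v', hδv', sub_zero])
  have key := (((isPowerSum_sq_add h2 h3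
    (hA.add_mem (Y := E ⊓ perp v ⊓ perp v' ⊓ perp w) (fun _ h => h.1.1.1) (fun _ h => h.1.1.2)
      (fun _ h => h.1.2)) le_rfl hQ₀Y a1 (inv_ne_zero h4)).add
    (IsPowerSum.single 2 (-4⁻¹) a2)).add (IsPowerSum.single 2 4⁻¹ a3)).add
    (IsPowerSum.single 2 (-4⁻¹) a4)
  convert key.mono subset_rfl (show _ ≤ finrank F E + 1 by omega) using 1
  have h4' : (C (4⁻¹) * 4 : MvPolynomial σ F) = 1 := by
    rw [show (4 : MvPolynomial σ F) = C 4 from (map_ofNat C 4).symm, ← C_mul,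
      inv_mul_cancel₀ h4, C_1]
  rw [hQ₀]
  simp only [map_add, map_sub, C_neg]
  linear_combination (-lin M * lin γ - lin T' * lin δ) * h4'

/-- A quadratic form having the plane of `u₀` and `u₁` in its radical. -/
theorem isPowerSum_of_radical (h2 : (2 : F) ≠ 0) (h3 : (3 : F) ≠ 0)
    {E : Submodule F (σ → F)} {A : Set (σ → F)} {u₀ u₁ t₀ t₁ : σ → F}
    (hA : IsDeterminedBy A E u₀ u₁) (ht₀ : t₀ ∈ E) (ht₁ : t₁ ∈ A) (h00 : t₀ ⬝ᵥ u₀ = 1)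
    (h10 : t₁ ⬝ᵥ u₀ = 0) (h11 : t₁ ⬝ᵥ u₁ = 1)
    {Q : MvPolynomial σ F} (hQ : Q ∈ forms E 2)
    (h₀ : dirDeriv u₀ Q = 0) (h₁ : dirDeriv u₁ Q = 0) :
    IsPowerSum A 2 (finrank F E) Q := by
  have hn := natCast_ne_zero_of_le_two h2
  have ht₁' : t₁ ∈ E ⊓ perp u₀ := ⟨hA.1 _ ht₁, h10⟩
  have n0 : t₀ ⬝ᵥ u₀ ≠ 0 := by rw [h00]; exact one_ne_zero
  have n1 : t₁ ⬝ᵥ u₁ ≠ 0 := by rw [h11]; exact one_ne_zero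
  have hQY := mem_forms_inf_perp ht₁' n1 hn (mem_forms_inf_perp ht₀ n0 hn hQ h₀) h₁
  have f0 := finrank_inf_perp ht₀ n0
  have f1 := finrank_inf_perp ht₁' n1
  have key := (isPowerSum_sq_add h2 h3
    (hA.add_mem (Y := E ⊓ perp u₀ ⊓ perp u₁) (fun _ h => h.1.1) (fun _ h => h.1.2)
      (fun _ h => h.2)) le_rfl hQY ht₁ one_ne_zero).add (IsPowerSum.single 2 (-1) ht₁)
  convert key.mono subset_rfl (show _ ≤ finrank F E by omega) using 1
  simp only [C_neg, C_1]
  ring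

/-- Every quadratic form in `n` variables is a combination of `n + 1` admissible squares. -/
theorem isPowerSum_quadratic (h2 : (2 : F) ≠ 0) (h3 : (3 : F) ≠ 0)
    {E : Submodule F (σ → F)} {A : Set (σ → F)} {u₀ u₁ t₀ t₁ : σ → F}
    (hA : IsDeterminedBy A E u₀ u₁) (ht₀ : t₀ ∈ E) (h00 : t₀ ⬝ᵥ u₀ = 1) (h01 : t₀ ⬝ᵥ u₁ = 0)
    (h10 : t₁ ⬝ᵥ u₀ = 0) (h11 : t₁ ⬝ᵥ u₁ = 1) {a b : F} (hab : a ≠ b)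
    (ht₁ : t₁ ∈ A) (hta : t₀ + a • t₁ ∈ A) (htb : t₀ + b • t₁ ∈ A)
    {Q : MvPolynomial σ F} (hQ : Q ∈ forms E 2) : IsPowerSum A 2 (finrank F E + 1) Q := by
  obtain ⟨r₀, hr₀E, hr₀⟩ := exists_lin_eq_dirDeriv hQ u₀
  obtain ⟨r₁, hr₁E, hr₁⟩ := exists_lin_eq_dirDeriv hQ u₁
  have hr := dotProduct_comm_of_dirDeriv hr₀ hr₁
  have ta0 (a : F) : (t₀ + a • t₁) ⬝ᵥ u₀ = 1 := by simp [add_dotProduct, h00, h10]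
  have ta1 (a : F) : (t₀ + a • t₁) ⬝ᵥ u₁ = a := by simp [add_dotProduct, h01, h11]
  obtain ⟨α, β, γ, e0, e1, e2⟩ : ∃ α β γ : F, r₀ ⬝ᵥ u₀ = β + γ ∧ r₀ ⬝ᵥ u₁ = a * β + b * γ ∧
      r₁ ⬝ᵥ u₁ = α + a ^ 2 * β + b ^ 2 * γ := by
    have hba : b - a ≠ 0 := sub_ne_zero.2 hab.symm
    set γ := (r₀ ⬝ᵥ u₁ - a * (r₀ ⬝ᵥ u₀)) / (b - a) with hγ
    have hγ' : γ * (b - a) = r₀ ⬝ᵥ u₁ - a * (r₀ ⬝ᵥ u₀) := div_mul_cancel₀ _ hba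
    refine ⟨r₁ ⬝ᵥ u₁ - a ^ 2 * (r₀ ⬝ᵥ u₀ - γ) - b ^ 2 * γ, r₀ ⬝ᵥ u₀ - γ, γ, by ring, ?_, by ring⟩
    linear_combination -hγ'
  have hab' : b - a ≠ 0 := sub_ne_zero.2 hab.symm
  have hba' : a - b ≠ 0 := sub_ne_zero.2 hab
  have m1 : (-1 : F) ≠ 0 := neg_ne_zero.2 one_ne_zero
  by_cases hα : α = 0 <;> by_cases hβ : β = 0 <;> by_cases hγ : γ = 0
  · subst hα hβ hγ
    simp only [mul_zero, add_zero] at e0 e1 e2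
    rw [e1] at hr
    have hdet : IsDeterminedBy A E u₀ (u₁ + (-a) • u₀) := by
      refine ⟨hA.1, fun T hT c hc m hm h h' => hA.2 T hT c hc m hm h ?_⟩
      simp only [dotProduct_add, dotProduct_smul, smul_eq_mul] at h'
      linear_combination h' + a * h
    have hδ : dirDeriv (u₁ + (-a) • u₀) Q = lin (r₁ + (-a) • r₀) := by
      rw [dirDeriv_add, dirDeriv_smul, hr₀, hr₁, map_add, lin_smul]
    by_cases hr₀0 : r₀ = 0
    · by_cases hr₁0 : r₁ = 0
      · exact (isPowerSum_of_radical h2 h3 hA ht₀ ht₁ h00 h10 h11 hQ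
          (by rw [hr₀, hr₀0, map_zero]) (by rw [hr₁, hr₁0, map_zero])).mono subset_rfl (by omega)
      · refine isPowerSum_of_isotropic h2 h3 (T := t₁) (T' := t₀ + a • t₁)
          ⟨hdet.1, fun T hT c hc m hm h h' => hdet.2 T hT c hc m hm h' h⟩ ht₁ hta
          ?_ h10 ?_ (ta0 a) hQ hδ hr₀ (by simpa [hr₀0] using hr₁0) ?_ ?_ e0
        · simp [dotProduct_add, h11, h10]
        · rw [dotProduct_add, dotProduct_smul, ta0, ta1]; simp
        · simp [hr₀0, dotProduct_add, e2, hr.symm]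
        · simp [hr₀0, hr.symm]
    · refine isPowerSum_of_isotropic h2 h3 (T := t₀ + a • t₁) (T' := t₁) hdet hta ht₁ (ta0 a)
        ?_ h10 ?_ hQ hr₀ hδ hr₀0 e0 ?_ ?_
      · rw [dotProduct_add, dotProduct_smul, ta0, ta1]; simp
      · simp [dotProduct_add, h11, h10]
      · simp [dotProduct_add, e0, e1]
      · simp [dotProduct_add, add_dotProduct, e0, e1, e2, hr.symm]
  · subst hα hβ
    refine isPowerSum_of_diag_restrict_add h2 h3 hA (T := t₀ + b • t₁) (T' := t₀ + a • t₁)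
      (S := t₀ + a • t₁) (α := γ) (α' := -1) (β := 1) htb hta ?_ hta hQ hγ m1 hr₀ hr₁ ?_ ?_ ?_
    · rw [ta0, ta0, ta1, ta1]; simpa using hba'
    · rw [ta0, ta0, e0]; ring
    · rw [ta0, ta0, ta1, ta1, e1]; ring
    · rw [ta1, ta1, e2]; ring
  · subst hα hγ
    refine isPowerSum_of_diag_restrict_add h2 h3 hA (T := t₀ + a • t₁) (T' := t₀ + b • t₁)
      (S := t₀ + b • t₁) (α := β) (α' := -1) (β := 1) hta htb ?_ htb hQ hβ m1 hr₀ hr₁ ?_ ?_ ?_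
    · rw [ta0, ta0, ta1, ta1]; simpa using hab'
    · rw [ta0, ta0, e0]; ring
    · rw [ta0, ta0, ta1, ta1, e1]; ring
    · rw [ta1, ta1, e2]; ring
  · subst hα
    refine isPowerSum_of_diag_restrict_add h2 h3 hA (T := t₀ + a • t₁) (T' := t₀ + b • t₁)
      (S := t₁) (α := β) (α' := γ) (β := 0) hta htb ?_ ht₁ hQ hβ hγ hr₀ hr₁ ?_ ?_ ?_
    · rw [ta0, ta0, ta1, ta1]; simpa using hab'
    · rw [ta0, ta0, e0]; ring
    · rw [ta0, ta0, ta1, ta1, e1]; ring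
    · rw [ta1, ta1, e2]; ring
  · subst hβ hγ
    refine isPowerSum_of_diag_restrict_add h2 h3 hA (T := t₁) (T' := t₀ + a • t₁)
      (S := t₀ + a • t₁) (α := α) (α' := -1) (β := 1) ht₁ hta ?_ hta hQ hα m1 hr₀ hr₁ ?_ ?_ ?_
    · rw [ta0, ta1, h10, h11]; simp
    · rw [ta0, h10, e0]; ring
    · rw [ta0, ta1, h10, h11, e1]; ring
    · rw [ta1, h11, e2]; ring
  · subst hβ
    refine isPowerSum_of_diag_restrict_add h2 h3 hA (T := t₁) (T' := t₀ + b • t₁)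
      (S := t₀ + a • t₁) (α := α) (α' := γ) (β := 0) ht₁ htb ?_ hta hQ hα hγ hr₀ hr₁ ?_ ?_ ?_
    · rw [ta0, ta1, h10, h11]; simp
    · rw [ta0, ta0, h10, e0]; ring
    · rw [ta0, ta0, ta1, ta1, h10, h11, e1]; ring
    · rw [ta1, ta1, h11, e2]; ring
  all_goals
    refine isPowerSum_of_diag_restrict_add h2 h3 hA (T := t₁) (T' := t₀ + a • t₁)
      (S := t₀ + b • t₁) (α := α) (α' := β) (β := γ) ht₁ hta ?_ htb hQ hα hβ hr₀ hr₁ ?_ ?_ ?_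
    · rw [ta0, ta1, h10, h11]; simp
    · rw [ta0, ta0, h10, e0]; ring
    · rw [ta0, ta0, ta1, ta1, h10, h11, e1]; ring
    · rw [ta1, ta1, h11, e2]; ring

/-- The forms of `E` that vanish at none of the vectors `u₁ + s u₀`, `s ∈ S`. -/
def admissible (E : Submodule F (σ → F)) (u₀ u₁ : σ → F) (S : Finset F) : Set (σ → F) :=
  {l | l ∈ E ∧ ∀ s ∈ S, l ⬝ᵥ u₁ + s * (l ⬝ᵥ u₀) ≠ 0}

theorem isDeterminedBy_admissible (E : Submodule F (σ → F)) (u₀ u₁ : σ → F) (S : Finset F) :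
    IsDeterminedBy (admissible E u₀ u₁ S) E u₀ u₁ := by
  refine ⟨fun T hT => hT.1, fun T hT c hc m hm h₀ h₁ => ⟨hm, fun s hs => ?_⟩⟩
  have : m ⬝ᵥ u₁ + s * (m ⬝ᵥ u₀) = c * (T ⬝ᵥ u₁ + s * (T ⬝ᵥ u₀)) := by rw [h₀, h₁]; ring
  rw [this]
  exact mul_ne_zero hc (hT.2 s hs)

theorem forms_of_forall_smul {E : Submodule F (σ → F)} {T : σ → F} (hT : T ∈ E)
    (hE : ∀ l ∈ E, ∃ c : F, l = c • T) {d : ℕ} {P : MvPolynomial σ F} (hP : P ∈ forms E d) :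
    ∃ c, P = C c * lin T ^ d := by
  have h : E = Submodule.span F {T} := by
    refine le_antisymm (fun l hl => ?_) ((Submodule.span_singleton_le_iff_mem _ _).2 hT)
    obtain ⟨c, rfl⟩ := hE l hl
    exact Submodule.smul_mem _ _ (Submodule.mem_span_singleton_self T)
  rw [forms, h, Submodule.map_span, Set.image_singleton, Submodule.span_pow,
    Set.singleton_pow] at hP
  obtain ⟨c, rfl⟩ := Submodule.mem_span_singleton.1 hP
  exact ⟨c, smul_eq_C_mul _ _⟩

/-- The bound for admissible decompositions implies the bound for decompositions avoiding a
single vector. -/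
theorem isPowerSum_of_admissible {d n B : ℕ} (hB : 1 ≤ B)
    (H : ∀ {E : Submodule F (σ → F)} {u₀ u₁ t₀ t₁ : σ → F}, finrank F E ≤ n → t₀ ∈ E → t₁ ∈ E →
      t₀ ⬝ᵥ u₀ = 1 → t₀ ⬝ᵥ u₁ = 0 → t₁ ⬝ᵥ u₀ = 0 → t₁ ⬝ᵥ u₁ = 1 →
      ∀ {P : MvPolynomial σ F}, P ∈ forms E d → IsPowerSum (admissible E u₀ u₁ {0}) d B P)
    {E : Submodule F (σ → F)} {u T : σ → F} (hE : finrank F E ≤ n) (hT : T ∈ E)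
    (hTu : T ⬝ᵥ u = 1) {P : MvPolynomial σ F} (hP : P ∈ forms E d) :
    IsPowerSum {l | l ∈ E ∧ l ⬝ᵥ u ≠ 0} d B P := by
  by_cases h : ∀ l ∈ E, ∃ c : F, l = c • T
  · obtain ⟨c, rfl⟩ := forms_of_forall_smul hT h hP
    have hTm : T ∈ {l | l ∈ E ∧ l ⬝ᵥ u ≠ 0} := ⟨hT, by rw [hTu]; exact one_ne_zero⟩
    exact (IsPowerSum.single d c hTm).mono subset_rfl hB
  · push Not at h
    obtain ⟨l, hl, hlT⟩ := h
    have h0 : l - (l ⬝ᵥ u) • T ≠ 0 := sub_ne_zero.2 (hlT _)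
    obtain ⟨w, hw⟩ : ∃ w, (l - (l ⬝ᵥ u) • T) ⬝ᵥ w ≠ 0 := by
      by_contra! hc
      exact h0 (eq_zero_of_dotProduct hc)
    set y := l - (l ⬝ᵥ u) • T with hy
    have hyE : y ∈ E := sub_mem hl (E.smul_mem _ hT)
    have hyu : y ⬝ᵥ u = 0 := by simp [hy, sub_dotProduct, hTu]
    have key := H (u₀ := w) (u₁ := u) (t₀ := (y ⬝ᵥ w)⁻¹ • y)
      (t₁ := T - (T ⬝ᵥ w) • (y ⬝ᵥ w)⁻¹ • y) hE (E.smul_mem _ hyE)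
      (sub_mem hT (E.smul_mem _ (E.smul_mem _ hyE)))
      (by simp [smul_dotProduct, hw]) (by simp [smul_dotProduct, hyu])
      (by simp [sub_dotProduct, smul_dotProduct, hw])
      (by simp [sub_dotProduct, smul_dotProduct, hyu, hTu]) hP
    refine key.mono (fun l hl => ⟨hl.1, ?_⟩) le_rfl
    simpa using hl.2 0 (by simp)

theorem isPowerSum_admissible [Fintype F] (h2 : (2 : F) ≠ 0) (h3 : (3 : F) ≠ 0) (e : ℕ)
    (hd : ∀ k : ℕ, 1 ≤ k → k ≤ e + 2 → (k : F) ≠ 0) (n : ℕ) {E : Submodule F (σ → F)}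
    {u₀ u₁ t₀ t₁ : σ → F} {S : Finset F} (hS : S.card + (e + 2) ≤ Fintype.card F)
    (hE : finrank F E ≤ n) (ht₀ : t₀ ∈ E) (ht₁ : t₁ ∈ E)
    (h00 : t₀ ⬝ᵥ u₀ = 1) (h01 : t₀ ⬝ᵥ u₁ = 0) (h10 : t₁ ⬝ᵥ u₀ = 0) (h11 : t₁ ⬝ᵥ u₁ = 1)
    (hS0 : S.Nonempty) {P : MvPolynomial σ F} (hP : P ∈ forms E (e + 2)) :
    IsPowerSum (admissible E u₀ u₁ S) (e + 2) ((n + e + 1).choose (e + 1)) P := by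
  classical
  induction e generalizing n E u₀ u₁ t₀ t₁ S P with
  | zero =>
    obtain ⟨x, hx, y, hy, hxy⟩ : ∃ x ∈ (S.image Neg.neg)ᶜ, ∃ y ∈ (S.image Neg.neg)ᶜ, x ≠ y := by
      apply Finset.one_lt_card.1
      have : (S.image Neg.neg).card ≤ S.card := Finset.card_image_le
      rw [Finset.card_compl]
      omega
    have hz : ∀ z ∈ (S.image Neg.neg)ᶜ, t₀ + z • t₁ ∈ admissible E u₀ u₁ S := by
      intro z hz
      refine ⟨add_mem ht₀ (E.smul_mem _ ht₁), fun s hs h => ?_⟩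
      rw [Finset.mem_compl, Finset.mem_image] at hz
      refine hz ⟨s, hs, ?_⟩
      simp only [add_dotProduct, smul_dotProduct, h00, h01, h10, h11, smul_eq_mul] at h
      linear_combination -h
    have := isPowerSum_quadratic h2 h3 (isDeterminedBy_admissible E u₀ u₁ S) ht₀ h00 h01 h10 h11
      hxy ⟨ht₁, fun s _ => by rw [h11, h10]; simp⟩ (hz x hx) (hz y hy) hP
    exact this.mono subset_rfl (by simpa using hE)
  | succ e ih =>
    have hd' : ∀ k : ℕ, 1 ≤ k → k ≤ e + 2 → (k : F) ≠ 0 := fun k h h' => hd k h (by omega)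
    induction n generalizing E u₀ u₁ t₀ t₁ S P with
    | zero =>
      have := finrank_inf_perp ht₀ (by rw [h00]; exact one_ne_zero)
      omega
    | succ n ihn =>
      obtain ⟨s, hs⟩ : ∃ s, s ∈ Sᶜ := by
        apply Finset.card_pos.1
        rw [Finset.card_compl]
        omega
      rw [Finset.mem_compl] at hs
      set w := u₁ + s • u₀ with hw
      have hlw : ∀ l : σ → F, l ⬝ᵥ w = l ⬝ᵥ u₁ + s * (l ⬝ᵥ u₀) := fun l => by
        rw [hw, dotProduct_add, dotProduct_smul, smul_eq_mul]
      have k1 := ih hd' (n + 1) (S := insert s S) (by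
        rw [Finset.card_insert_of_notMem hs]; omega) hE ht₀ ht₁ h00 h01 h10 h11
        (Finset.insert_nonempty _ _) (dirDeriv_mem w hP)
      obtain ⟨Q, hQE, hQ, hQw⟩ := k1.exists_antideriv (E := E) (w := w)
        (fun l hl => ⟨hl.1, by rw [hlw]; exact hl.2 s (Finset.mem_insert_self _ _)⟩)
        (hd _ (by omega) (by omega))
      have ht₁w : t₁ ⬝ᵥ w = 1 := by rw [hlw, h11, h10]; simp
      have ht₁w' : t₁ ⬝ᵥ w ≠ 0 := by rw [ht₁w]; exact one_ne_zero
      have hR : P - Q ∈ forms (E ⊓ perp w) (e + 1 + 2) :=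
        mem_forms_inf_perp ht₁ ht₁w' hd (sub_mem hP hQE) (by rw [map_sub, hQw, sub_self])
      have hf := finrank_inf_perp ht₁ ht₁w'
      have k2 := isPowerSum_of_admissible (F := F) (σ := σ) (n := n)
        (Nat.choose_pos (show e + 1 + 1 ≤ n + (e + 1) + 1 by omega))
        (fun hE ht₀ ht₁ a b c d => ihn (S := {0})
          (by rw [Finset.card_singleton]; have := hS0.card_pos; omega) hE ht₀ ht₁ a b c d
          (Finset.singleton_nonempty _)) (E := E ⊓ perp w) (u := u₀)
        (T := t₀ - s • t₁) (by omega)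
        ⟨sub_mem ht₀ (E.smul_mem _ ht₁), by
          rw [SetLike.mem_coe, mem_perp, hlw]
          simp [sub_dotProduct, smul_dotProduct, h00, h01, h10, h11]⟩
        (by simp [sub_dotProduct, smul_dotProduct, h00, h10]) hR
      have k3 := (hQ.mono (B := admissible E u₀ u₁ S)
        (fun l hl => ⟨hl.1, fun x hx => hl.2 x (Finset.mem_insert_of_mem hx)⟩) le_rfl).add
        (k2.mono (B := admissible E u₀ u₁ S) (fun l hl => ⟨hl.1.1, fun x hx h => ?_⟩) le_rfl)
      · rw [add_sub_cancel] at k3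
        refine k3.mono subset_rfl (le_of_eq ?_)
        have := Nat.choose_succ_succ (n + e + 2) (e + 1)
        rw [show n + 1 + (e + 1) + 1 = n + e + 2 + 1 by ring, this]
        congr 2
        ring
      · have h1 := hl.1.2
        rw [SetLike.mem_coe, mem_perp, hlw] at h1
        have h4 : (x - s) * (l ⬝ᵥ u₀) = 0 := by linear_combination h - h1
        rcases mul_eq_zero.1 h4 with h5 | h5
        · exact hs (sub_eq_zero.1 h5 ▸ hx)
        · exact hl.2 h5

theorem IsPowerSum.exists_eval {n d m : ℕ} {A : Set (Fin n → F)} {P : MvPolynomial (Fin n) F}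
    (hP : IsPowerSum A d m P) :
    ∃ k : ℕ, k ≤ m ∧ ∃ (α : Fin k → F) (β : Fin k → Fin n → F),
      ∀ x : Fin n → F, eval x P = ∑ i, α i * (∑ j, β i j * x j) ^ d := by
  obtain ⟨L, hL, -, rfl⟩ := hP
  refine ⟨L.length, hL, fun i => (L.get i).1, fun i => (L.get i).2, fun x => ?_⟩
  rw [map_list_sum, List.map_map, ← Fin.sum_univ_fun_getElem]
  simp [eval_lin]

theorem isPowerSum_of_isHomogeneous (p n d : ℕ) [Fact p.Prime] (hdp : d < p)
    (P : MvPolynomial (Fin n) (ZMod p)) (hP : P.IsHomogeneous d) :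
    IsPowerSum Set.univ d (Nat.choose (n + d - 1) (d - 1)) P := by
  have hd : ∀ k : ℕ, 1 ≤ k → k < p → (k : ZMod p) ≠ 0 := by
    intro k h1 hk h
    rw [ZMod.natCast_eq_zero_iff] at h
    exact absurd (Nat.le_of_dvd h1 h) (by omega)
  have hP' := isHomogeneous_mem_forms hP
  have hfin : finrank (ZMod p) ↥(⊤ : Submodule (ZMod p) (Fin n → ZMod p)) = n := by
    simp
  match d with
  | 0 =>
    obtain ⟨c, rfl⟩ := mem_forms_zero hP'
    simpa using IsPowerSum.single (A := Set.univ) 0 c (Set.mem_univ (0 : Fin n → ZMod p))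
  | 1 =>
    obtain ⟨m, -, rfl⟩ := mem_forms_one hP'
    simpa using IsPowerSum.single (A := Set.univ) 1 1 (Set.mem_univ m)
  | 2 =>
    refine (isPowerSum_diag ?_ hfin.le hP').mono (Set.subset_univ _) ?_
    · exact_mod_cast hd 2 (by omega) hdp
    · simp
  | e + 3 =>
    rcases n with _ | n
    · have : finrank (ZMod p) ↥(⊤ : Submodule (ZMod p) (Fin 0 → ZMod p)) = 0 := hfin
      rw [Submodule.finrank_eq_zero.1 this, forms, Submodule.map_bot, pow_succ,
        Submodule.mul_bot, Submodule.mem_bot] at hP'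
      rw [hP']
      exact IsPowerSum.zero _ _ _
    · have h2 : (2 : ZMod p) ≠ 0 := by exact_mod_cast hd 2 (by omega) (by omega)
      have h3 : (3 : ZMod p) ≠ 0 := by exact_mod_cast hd 3 (by omega) (by omega)
      refine (isPowerSum_of_admissible (F := ZMod p) (σ := Fin (n + 1)) (n := n + 1)
        (d := e + 3) (Nat.choose_pos (show e + 1 + 1 ≤ n + 1 + (e + 1) + 1 by omega))
        (fun hE ht₀ ht₁ a b c d => isPowerSum_admissible h2 h3 (e + 1)
          (fun k h h' => hd k h (by omega)) (n + 1)
          (by rw [Finset.card_singleton, ZMod.card]; omega) hE ht₀ ht₁ a b c d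
          (Finset.singleton_nonempty _)) (u := Pi.single 0 1) (T := Pi.single 0 1) hfin.le
        trivial (by simp) hP').mono (Set.subset_univ _) (le_of_eq ?_)
      congr 1

end Waring

theorem stmt_1 (p n d : ℕ) (hp : p.Prime) (hdp : d < p)
    (P : MvPolynomial (Fin n) (ZMod p)) (hP : P.IsHomogeneous d) :
    ∃ m : ℕ, m ≤ Nat.choose (n + d - 1) (d - 1) ∧
      ∃ (α : Fin m → ZMod p) (β : Fin m → Fin n → ZMod p),
        ∀ x : Fin n → ZMod p,
          MvPolynomial.eval x P = ∑ i, α i * (∑ j, β i j * x j) ^ d := by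
  have := Fact.mk hp
  exact (Waring.isPowerSum_of_isHomogeneous p n d hdp P hP).exists_eval
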